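/- arXiv:0712.0123 — 2 statements merged into one kernel-verified Lean document; each statement's English description precedes it below -/
import Mathlib

section
/- Let R be a commutative coherent ring that is n-FC (Ext_R^{n+1}(P, R) = 0 for every finitely presented R-module P) and m-perfect (every flat R-module has projective dimension at most m), for some nonnegative integers n and m. If M is an R-module such that Ext_R^i(M, Q) = 0 for every integer i ≥ 1 and every R-module Q of finite projective dimension, then there exists an injective R-module homomorphism from M into a projective R-module. -/
open CategoryTheory

noncomputable section

universe u

/-- The `j`-th Ext group of the `R`-modules `M` and `N`. -/
def extGroup (R : Type u) [CommRing R] (M N : ModuleCat.{u} R) (j : ℕ) : ModuleCat R :=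
  ((Ext R (ModuleCat.{u} R) j).obj (Opposite.op M)).obj N

/-- `Ext_R^j(M, N) = 0`. -/
def ExtVanish (R : Type u) [CommRing R] (M N : ModuleCat.{u} R) (j : ℕ) : Prop :=
  Subsingleton (extGroup R M N j)

/-- The projective dimension of `M` is at most `n`
(via the standard Ext-vanishing characterization). -/
def ProjDimLE (R : Type u) [CommRing R] (M : ModuleCat.{u} R) (n : ℕ) : Prop :=
  ∀ (N : ModuleCat.{u} R) (j : ℕ), n < j → ExtVanish R M N j

/-- `M` has finite projective dimension. -/
def HasFinProjDim (R : Type u) [CommRing R] (M : ModuleCat.{u} R) : Prop :=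
  ∃ n, ProjDimLE R M n

/-- `R` is a coherent ring: every finitely generated ideal is finitely presented. -/
def IsCoherentRing (R : Type u) [CommRing R] : Prop :=
  ∀ I : Ideal R, I.FG → Module.FinitePresentation R I

/-!
Embed `M` into an injective module `E`. For finitely presented `N`, biduality identifies
`Tor_{n+1}(N, E)` with `Hom(Ext^{n+1}(N, R), E)`, which vanishes by the `n`-FC condition, so the
`n`-th syzygy of `E` is flat. By `m`-perfectness `E` then has finite projective dimension, and so
does the kernel `K` of a free cover `P → E`. As `Ext¹(M, K) = 0`, the embedding `M → E` lifts to
`M → P`, and the lift is injective.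
-/

open TensorProduct Module

section ExtComparison

variable {C : Type*} [Category* C] [Abelian C]

theorem subsingleton_ext_succ_iff_exists_comp_eq [HasExt C] {X : C} (P : ProjectiveResolution X)
    (Y : C) (k : ℕ) :
    Subsingleton (Abelian.Ext X Y (k + 1)) ↔
      ∀ f : P.complex.X (k + 1) ⟶ Y, P.complex.d (k + 2) (k + 1) ≫ f = 0 →
        ∃ g : P.complex.X k ⟶ Y, P.complex.d (k + 1) k ≫ g = f := by
  refine ⟨fun _ f hf ↦ (P.extMk_eq_zero_iff f (k + 2) rfl hf k rfl).1 (Subsingleton.elim _ _),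
    fun h ↦ subsingleton_of_forall_eq 0 fun x ↦ ?_⟩
  obtain ⟨f, hf, rfl⟩ := P.extMk_surjective x (k + 2) rfl
  exact (P.extMk_eq_zero_iff f (k + 2) rfl hf k rfl).2 (h f hf)

variable {R : Type u} [CommRing R]

theorem extVanish_succ_iff_exists_comp_eq {X : ModuleCat.{u} R} (P : ProjectiveResolution X)
    (Y : ModuleCat.{u} R) (k : ℕ) :
    ExtVanish R X Y (k + 1) ↔
      ∀ f : P.complex.X (k + 1) ⟶ Y, P.complex.d (k + 2) (k + 1) ≫ f = 0 →
        ∃ g : P.complex.X k ⟶ Y, P.complex.d (k + 1) k ≫ g = f := by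
  rw [ExtVanish, extGroup, ← ModuleCat.isZero_iff_subsingleton,
    (P.isoExt (R := R) (k + 1) Y).isZero_iff, ← HomologicalComplex.exactAt_iff_isZero_homology,
    HomologicalComplex.exactAt_iff' _ k (k + 1) (k + 2) (by simp) (by simp),
    ShortComplex.moduleCat_exact_iff]
  rfl

theorem extVanish_succ_iff_subsingleton (X Y : ModuleCat.{u} R) (k : ℕ) :
    ExtVanish R X Y (k + 1) ↔ Subsingleton (Abelian.Ext.{u} X Y (k + 1)) :=
  (extVanish_succ_iff_exists_comp_eq (projectiveResolution X) Y k).trans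
    (subsingleton_ext_succ_iff_exists_comp_eq (projectiveResolution X) Y k).symm

theorem projDimLE_iff_hasProjectiveDimensionLE (X : ModuleCat.{u} R) (d : ℕ) :
    ProjDimLE R X d ↔ HasProjectiveDimensionLE X d := by
  rw [HasProjectiveDimensionLE, hasProjectiveDimensionLT_iff.{u}]
  constructor
  · rintro h (_ | i) hi Y x
    · omega
    · have := (extVanish_succ_iff_subsingleton X Y i).1 (h Y (i + 1) hi)
      exact Subsingleton.elim _ _
  · rintro h Y (_ | i) hi
    · omega
    · exact (extVanish_succ_iff_subsingleton X Y i).2 <|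
        subsingleton_of_forall_eq 0 (@h (i + 1) hi Y)

end ExtComparison

section ShortExactSequence

variable {C : Type*} [Category* C] [Abelian C] [HasExt C] {S : ShortComplex C}

theorem exists_comp_g_eq_of_subsingleton_ext (hS : S.ShortExact) {X : C}
    (h : Subsingleton (Abelian.Ext X S.X₁ 1)) (φ : X ⟶ S.X₃) : ∃ ψ : X ⟶ S.X₂, ψ ≫ S.g = φ := by
  obtain ⟨x, hx⟩ := Abelian.Ext.covariant_sequence_exact₃ X hS (Abelian.Ext.mk₀ φ) (zero_add 1)
    (Subsingleton.elim _ _)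
  obtain ⟨ψ, rfl⟩ := (Abelian.Ext.mk₀_bijective _ _).2 x
  exact ⟨ψ, (Abelian.Ext.mk₀_bijective _ _).1 (by rw [← hx, Abelian.Ext.mk₀_comp_mk₀])⟩

theorem exists_f_comp_eq_of_subsingleton_ext (hS : S.ShortExact) {Y : C}
    (h : Subsingleton (Abelian.Ext S.X₃ Y 1)) (φ : S.X₁ ⟶ Y) : ∃ ψ : S.X₂ ⟶ Y, S.f ≫ ψ = φ := by
  obtain ⟨x, hx⟩ := Abelian.Ext.contravariant_sequence_exact₁ hS Y (Abelian.Ext.mk₀ φ) (add_zero 1)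
    (Subsingleton.elim _ _)
  obtain ⟨ψ, rfl⟩ := (Abelian.Ext.mk₀_bijective _ _).2 x
  exact ⟨ψ, (Abelian.Ext.mk₀_bijective _ _).1 (by rw [← hx, Abelian.Ext.mk₀_comp_mk₀])⟩

theorem subsingleton_ext_X₁_of_projective (hS : S.ShortExact) [Projective S.X₂] {Y : C} {n : ℕ}
    (h : Subsingleton (Abelian.Ext S.X₃ Y (n + 2))) :
    Subsingleton (Abelian.Ext S.X₁ Y (n + 1)) := by
  refine subsingleton_of_forall_eq 0 fun x ↦ ?_
  obtain ⟨y, rfl⟩ := Abelian.Ext.contravariant_sequence_exact₁ hS Y x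
    (show 1 + (n + 1) = n + 2 by omega) (Subsingleton.elim _ _)
  rw [Abelian.Ext.eq_zero_of_projective y, Abelian.Ext.comp_zero]

end ShortExactSequence

section Coherent

variable {R : Type u} [CommRing R]

theorem IsCoherentRing.finitePresentation_of_injective_pi (hcoh : IsCoherentRing R) {k : ℕ}
    {N : Type*} [AddCommGroup N] [Module R N] [Module.Finite R N] (f : N →ₗ[R] Fin k → R)
    (hf : Function.Injective f) : FinitePresentation R N := by
  induction k generalizing N with
  | zero =>
    have : Subsingleton N := hf.subsingleton
    exact finitePresentation_of_projective R N
  | succ k ih =>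
    let p : N →ₗ[R] R := LinearMap.proj 0 ∘ₗ f
    let tail : LinearMap.ker p.rangeRestrict →ₗ[R] Fin k → R :=
      LinearMap.funLeft R R Fin.succ ∘ₗ f ∘ₗ (LinearMap.ker p.rangeRestrict).subtype
    have htail : Function.Injective tail := by
      refine (injective_iff_map_eq_zero tail).2 fun ⟨x, hx⟩ h ↦ ?_
      have hx0 : f x 0 = 0 := by simpa [p] using hx
      have hfx : f x = 0 := funext (Fin.cases hx0 fun i ↦ congrFun h i)
      exact Subtype.ext (hf (hfx.trans (map_zero f).symm))
    have : FinitePresentation R (LinearMap.range p) := hcoh _ (Module.Finite.iff_fg.1 inferInstance)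
    have : Module.Finite R (LinearMap.ker p.rangeRestrict) :=
      Module.Finite.iff_fg.2 (FinitePresentation.fg_ker _ p.surjective_rangeRestrict)
    have := ih tail htail
    exact finitePresentation_of_ker p.rangeRestrict p.surjective_rangeRestrict

theorem IsCoherentRing.finitePresentation_of_injective (hcoh : IsCoherentRing R)
    {N F : Type*} [AddCommGroup N] [Module R N] [Module.Finite R N] [AddCommGroup F] [Module R F]
    [Module.Finite R F] [Module.Projective R F] (i : N →ₗ[R] F) (hi : Function.Injective i) :
    FinitePresentation R N := by
  obtain ⟨k, _, g, _, hg, _⟩ := Module.Finite.exists_comp_eq_id_of_projective R F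
  exact hcoh.finitePresentation_of_injective_pi (g ∘ₗ i) (hg.comp hi)

theorem IsCoherentRing.finitePresentation_X₁ (hcoh : IsCoherentRing R)
    {S : ShortComplex (ModuleCat.{u} R)} (hS : S.ShortExact) [Module.Finite R S.X₂]
    [Module.Projective R S.X₂] [FinitePresentation R S.X₃] : FinitePresentation R S.X₁ := by
  have hf := hS.moduleCat_injective_f
  have hrange : (LinearMap.range S.f.hom).FG := by
    rw [hS.exact.moduleCat_range_eq_ker]
    exact FinitePresentation.fg_ker S.g.hom hS.moduleCat_surjective_g
  have : Module.Finite R (LinearMap.range S.f.hom) := Module.Finite.iff_fg.2 hrange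
  have : Module.Finite R S.X₁ := .equiv (LinearEquiv.ofInjective S.f.hom hf).symm
  exact hcoh.finitePresentation_of_injective S.f.hom hf

end Coherent

section Biduality

variable {R : Type*} [CommRing R]

/-- The natural map `X ⊗ E → Hom(X*, E)`, `x ⊗ e ↦ (g ↦ g x • e)`, which compares tensoring with
`E` to taking the dual and then mapping into `E`. -/
def bidualTensorHom (X E : Type*) [AddCommGroup X] [Module R X] [AddCommGroup E] [Module R E] :
    X ⊗[R] E →ₗ[R] Dual R X →ₗ[R] E :=
  dualTensorHom R (Dual R X) E ∘ₗ (Dual.eval R X).rTensor E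

theorem bidualTensorHom_comp_rTensor {X Y : Type*} (E : Type*) [AddCommGroup X] [Module R X]
    [AddCommGroup Y] [Module R Y] [AddCommGroup E] [Module R E] (h : X →ₗ[R] Y) :
    bidualTensorHom Y E ∘ₗ h.rTensor E = h.dualMap.lcomp R E ∘ₗ bidualTensorHom X E := by
  ext
  simp [bidualTensorHom]

theorem bidualTensorHom_bijective (X E : Type*) [AddCommGroup X] [Module R X] [Module.Finite R X]
    [Module.Projective R X] [AddCommGroup E] [Module R E] :
    Function.Bijective (bidualTensorHom (R := R) X E) :=
  dualTensorHom_bijective.comp ((evalEquiv R X).rTensor E).bijective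

end Biduality

section InjectiveBiduality

theorem exact_lcomp_of_exact {R : Type*} [CommRing R] {A B C E : Type u} [AddCommGroup A]
    [Module R A] [AddCommGroup B] [Module R B] [AddCommGroup C] [Module R C] [AddCommGroup E]
    [Module R E] [Module.Injective R E] {f : A →ₗ[R] B} {g : B →ₗ[R] C}
    (h : Function.Exact f g) : Function.Exact (g.lcomp R E) (f.lcomp R E) := by
  intro φ
  constructor
  · intro hφ
    have hle : LinearMap.ker g ≤ LinearMap.ker φ := by
      rw [h.linearMap_ker_eq]
      exact LinearMap.range_le_ker_iff.2 hφ
    obtain ⟨ψ, hψ⟩ := Module.Injective.out ((LinearMap.ker g).liftQ g le_rfl)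
      (LinearMap.ker_eq_bot.1 (Submodule.ker_liftQ_eq_bot _ _ _ le_rfl))
      ((LinearMap.ker g).liftQ φ hle)
    exact ⟨ψ, LinearMap.ext fun b ↦ by simpa using hψ (Submodule.Quotient.mk b)⟩
  · rintro ⟨ψ, rfl⟩
    exact LinearMap.ext fun a ↦ by simp [h.apply_apply_eq_zero]

variable {R : Type u} [CommRing R]

theorem bidualTensorHom_injective (X E : Type u) [AddCommGroup X] [Module R X]
    [FinitePresentation R X] [AddCommGroup E] [Module R E] [Module.Injective R E] :
    Function.Injective (bidualTensorHom (R := R) X E) := by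
  obtain ⟨a, b, p, r, hp, hrp⟩ := FinitePresentation.exists_fin' R X
  have hdual : Function.Exact p.dualMap r.dualMap :=
    LinearMap.exact_lcomp_of_exact_of_surjective _ hrp hp
  exact LinearMap.injective_of_surjective_of_injective_of_right_exact _ _ _ _ _ _ _
    (bidualTensorHom_comp_rTensor E r).symm (bidualTensorHom_comp_rTensor E p).symm
    (rTensor_exact E hrp hp) (exact_lcomp_of_exact hdual)
    (bidualTensorHom_bijective _ E).2 (bidualTensorHom_bijective _ E).1
    (LinearMap.rTensor_surjective E hp)

theorem rTensor_injective_of_dualMap_surjective {X Y : Type u} (E : Type u) [AddCommGroup X]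
    [Module R X] [FinitePresentation R X] [AddCommGroup Y] [Module R Y] [AddCommGroup E]
    [Module R E] [Module.Injective R E] (i : X →ₗ[R] Y) (hi : Function.Surjective i.dualMap) :
    Function.Injective (i.rTensor E) := by
  have hcomp : Function.Injective (bidualTensorHom Y E ∘ i.rTensor E) := by
    rw [← LinearMap.coe_comp, bidualTensorHom_comp_rTensor]
    exact (LinearMap.lcomp_injective_of_surjective _ hi).comp (bidualTensorHom_injective X E)
  exact hcomp.of_comp

end InjectiveBiduality

section TensorBalance

variable {R W F N A L E : Type*} [CommRing R] [AddCommGroup W] [Module R W] [AddCommGroup F]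
  [Module R F] [AddCommGroup N] [Module R N] [AddCommGroup A] [Module R A] [AddCommGroup L]
  [Module R L] [AddCommGroup E] [Module R E]

theorem rTensor_lTensor_apply_comm (f : W →ₗ[R] F) (g : A →ₗ[R] L) (t : W ⊗[R] A) :
    f.rTensor L (g.lTensor W t) = g.lTensor F (f.rTensor A t) := by
  rw [← LinearMap.comp_apply, ← LinearMap.comp_apply, LinearMap.rTensor_comp_lTensor,
    LinearMap.lTensor_comp_rTensor]

/- As `F` is flat, `h` makes `Tor₁(N, E)` vanish; the conclusion reads this off the resolution of
`E` instead of that of `N`. -/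
theorem lTensor_injective_of_rTensor_injective [Module.Flat R F] {i : W →ₗ[R] F} {p : F →ₗ[R] N}
    (hip : Function.Exact i p) (hp : Function.Surjective p) {j : A →ₗ[R] L} {q : L →ₗ[R] E}
    (hj : Function.Injective j) (hjq : Function.Exact j q) (hq : Function.Surjective q)
    (h : Function.Injective (i.rTensor E)) : Function.Injective (j.lTensor N) := by
  refine (injective_iff_map_eq_zero _).2 fun t ht ↦ ?_
  obtain ⟨y, rfl⟩ := LinearMap.rTensor_surjective A hp t
  obtain ⟨z, hz⟩ : ∃ z, i.rTensor L z = j.lTensor F y :=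
    (rTensor_exact L hip hp _).1 (by rw [rTensor_lTensor_apply_comm, ht])
  have hqz : q.lTensor W z = 0 := h <| by
    rw [rTensor_lTensor_apply_comm, hz, (lTensor_exact F hjq hq).apply_apply_eq_zero, map_zero]
  obtain ⟨w, rfl⟩ := (lTensor_exact W hjq hq _).1 hqz
  have hwy : i.rTensor A w = y :=
    Module.Flat.lTensor_preserves_injective_linearMap j hj
      (by rw [← rTensor_lTensor_apply_comm, hz])
  rw [← hwy, (rTensor_exact A hip hp).apply_apply_eq_zero]

end TensorBalance

section Syzygy

variable {R : Type u} [CommRing R]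

/-- The first syzygy of `M`: the kernel of the canonical surjection onto `M` from the free module
on the elements of `M`. Higher syzygies are the iterates `syzygy^[n] M`. -/
def syzygy (M : ModuleCat.{u} R) : ModuleCat.{u} R := M.projectiveShortComplex.X₁

theorem hasProjectiveDimensionLE_of_iterate_syzygy (M : ModuleCat.{u} R) (n d : ℕ)
    (h : HasProjectiveDimensionLE (syzygy^[n] M) d) : HasProjectiveDimensionLE M (d + n) := by
  induction n generalizing d with
  | zero => exact h
  | succ n ih =>
    rw [Function.iterate_succ_apply'] at h
    have h' : HasProjectiveDimensionLE (syzygy^[n] M) (d + 1) :=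
      ((syzygy^[n] M).shortExact_projectiveShortComplex.hasProjectiveDimensionLT_X₃_iff d
        inferInstance).2 h
    rw [add_comm n, ← add_assoc]
    exact ih _ h'

theorem hasProjectiveDimensionLE_syzygy (M : ModuleCat.{u} R) (d : ℕ)
    [HasProjectiveDimensionLE M d] : HasProjectiveDimensionLE (syzygy M) d :=
  (M.shortExact_projectiveShortComplex.hasProjectiveDimensionLT_X₃_iff d inferInstance).1
    (hasProjectiveDimensionLT_of_ge M (d + 1) (d + 2) (by omega))

theorem exists_mono_to_injective (M : ModuleCat.{u} R) :
    ∃ (E : ModuleCat.{u} R) (ι : M ⟶ E), Module.Injective R E ∧ Mono ι := by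
  have := ModuleCat.enoughInjectives.{u, u} R
  obtain ⟨I⟩ := EnoughInjectives.presentation M
  exact ⟨I.J, I.f, (Module.injective_iff_injective_object R I.J).2 I.injective, I.mono⟩

theorem exists_injective_of_subsingleton_ext_syzygy {M E : ModuleCat.{u} R} (ι : M ⟶ E) [Mono ι]
    (h : Subsingleton (Abelian.Ext.{u} M (syzygy E) 1)) :
    ∃ (P : ModuleCat.{u} R) (f : M →ₗ[R] P), Module.Projective R P ∧ Function.Injective f := by
  obtain ⟨ψ, hψ⟩ := exists_comp_g_eq_of_subsingleton_ext E.shortExact_projectiveShortComplex h ι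
  have : Mono (ψ ≫ E.projectiveShortComplex.g) := hψ ▸ ‹Mono ι›
  exact ⟨_, ψ.hom, inferInstance,
    (ModuleCat.mono_iff_injective ψ).1 (mono_of_mono ψ E.projectiveShortComplex.g)⟩

/- Induction on `n`, trading a syzygy of `E` for a syzygy of `S.X₃`; on the original sequence the
conclusion says that `Tor₁(S.X₃, syzygy^[n] E)`, that is `Tor_{n+1}(S.X₃, E)`, vanishes. -/
theorem rTensor_iterate_syzygy_injective (hcoh : IsCoherentRing R) (E : ModuleCat.{u} R)
    [Module.Injective R E] (n : ℕ) {S : ShortComplex (ModuleCat.{u} R)} (hS : S.ShortExact)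
    [Module.Finite R S.X₂] [Module.Projective R S.X₂] [FinitePresentation R S.X₃]
    (h : Subsingleton (Abelian.Ext.{u} S.X₃ (ModuleCat.of R R) (n + 1))) :
    Function.Injective (S.f.hom.rTensor (syzygy^[n] E : ModuleCat.{u} R)) := by
  induction n generalizing S with
  | zero =>
    have := hcoh.finitePresentation_X₁ hS
    refine rTensor_injective_of_dualMap_surjective E S.f.hom fun g ↦ ?_
    obtain ⟨g', hg'⟩ := exists_f_comp_eq_of_subsingleton_ext hS h (ModuleCat.ofHom g)
    exact ⟨g'.hom, congrArg ModuleCat.Hom.hom hg'⟩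
  | succ n ih =>
    have := hcoh.finitePresentation_X₁ hS
    rw [Function.iterate_succ_apply']
    set K := syzygy^[n] E
    let T := K.projectiveShortComplex
    have hT : T.ShortExact := K.shortExact_projectiveShortComplex
    obtain ⟨k, r, hr⟩ := Module.Finite.exists_fin' R S.X₁
    have hcover : Function.Injective ((LinearMap.ker r).subtype.rTensor K) :=
      ih (LinearMap.shortExact_shortComplexKer hr) (subsingleton_ext_X₁_of_projective hS h)
    have hT₁ : Function.Injective (T.f.hom.lTensor S.X₁) :=
      lTensor_injective_of_rTensor_injective r.exact_subtype_ker_map hr hT.moduleCat_injective_f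
        ((ShortComplex.ShortExact.moduleCat_exact_iff_function_exact _).1 hT.exact)
        hT.moduleCat_surjective_g hcover
    have hT₂ : Function.Injective (S.f.hom.rTensor T.X₂) :=
      Module.Flat.rTensor_preserves_injective_linearMap _ hS.moduleCat_injective_f
    have hcomp : Function.Injective (T.f.hom.lTensor S.X₂ ∘ S.f.hom.rTensor T.X₁) := by
      simpa only [Function.comp_def, rTensor_lTensor_apply_comm] using hT₂.comp hT₁
    exact hcomp.of_comp

theorem flat_iterate_syzygy (hcoh : IsCoherentRing R) (E : ModuleCat.{u} R) [Module.Injective R E]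
    (n : ℕ) (h : ∀ N : ModuleCat.{u} R, FinitePresentation R N →
      Subsingleton (Abelian.Ext.{u} N (ModuleCat.of R R) (n + 1))) :
    Module.Flat R (syzygy^[n] E : ModuleCat.{u} R) := by
  refine Module.Flat.iff_rTensor_injective.2 fun I hI ↦ ?_
  have : FinitePresentation R (R ⧸ I) :=
    finitePresentation_of_surjective I.mkQ I.mkQ_surjective (by rwa [Submodule.ker_mkQ])
  have hS := LinearMap.shortExact_shortComplexKer I.mkQ_surjective
  have hker : Function.Injective
      ((LinearMap.ker I.mkQ).subtype.rTensor (syzygy^[n] E : ModuleCat.{u} R)) :=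
    rTensor_iterate_syzygy_injective hcoh E n hS (h _ this)
  rwa [Submodule.ker_mkQ] at hker

end Syzygy

theorem stmt1 (R : Type u) [CommRing R] (n m : ℕ)
    (hcoh : IsCoherentRing R)
    (hFC : ∀ (P : ModuleCat.{u} R), Module.FinitePresentation R P →
      ExtVanish R P (ModuleCat.of R R) (n + 1))
    (hperf : ∀ (F : ModuleCat.{u} R), Module.Flat R F → ProjDimLE R F m)
    (M : ModuleCat.{u} R)
    (hM : ∀ (Q : ModuleCat.{u} R), HasFinProjDim R Q →
      ∀ i : ℕ, 1 ≤ i → ExtVanish R M Q i) :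
    ∃ (P : ModuleCat.{u} R) (f : M →ₗ[R] P),
      Module.Projective R P ∧ Function.Injective f := by
  obtain ⟨E, ι, _, _⟩ := exists_mono_to_injective M
  have hflat : Module.Flat R (syzygy^[n] E : ModuleCat.{u} R) :=
    flat_iterate_syzygy hcoh E n fun N hN ↦
      (extVanish_succ_iff_subsingleton N _ n).1 (hFC N hN)
  have hpd : HasProjectiveDimensionLE E (m + n) :=
    hasProjectiveDimensionLE_of_iterate_syzygy E n m <|
      (projDimLE_iff_hasProjectiveDimensionLE _ m).1 (hperf _ hflat)
  have hsyz : HasFinProjDim R (syzygy E) :=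
    ⟨m + n, (projDimLE_iff_hasProjectiveDimensionLE _ _).2 (hasProjectiveDimensionLE_syzygy E _)⟩
  exact exists_injective_of_subsingleton_ext_syzygy ι <|
    (extVanish_succ_iff_subsingleton M (syzygy E) 0).1 (hM _ hsyz 1 le_rfl)

end
end

section
/- Let R be a commutative coherent ring that is n-FC (Ext_R^{n+1}(P, R) = 0 for every finitely presented R-module P) and m-perfect (every flat R-module has projective dimension at most m), for some nonnegative integers n and m. If M is an R-module such that Ext_R^i(M, Q) = 0 for every integer i ≥ 1 and every R-module Q of finite projective dimension, then M is Gorenstein projective: there exists an exact sequence of R-modules 0 → M → P⁰ → P¹ → P² → ⋯ with each Pⁱ projective, which remains exact after applying the functor Hom_R(−, Q) for every projective R-module Q. -/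
open CategoryTheory

noncomputable section

universe u

/-
If injective modules have finite projective dimension, a module `M` with `Ext¹(M, Q) = 0` for all
`Q` of finite projective dimension has an injective projective preenvelope `f : M → P`, and
`coker f` is again such a module; iterating gives the coresolution.

* A map from `M` to a free module `R^(J)` involves, for each `x : M`, finitely many coordinates, so
  it factors through `R^(M × ℕ)`. Hence the evaluation `M → F := (R^(M × ℕ))^Hom(M, R^(M × ℕ))` has
  the factorization property of a preenvelope. Over a coherent ring `F` is flat (Chase), hence of
  finite projective dimension. The kernel of a free cover `P → F` then also has finite projective
  dimension, so `M → F` lifts to `P`; the lift is `f`.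
* In the same way every map from `M` to a module of finite projective dimension lifts to a free
  cover, and so extends along `f`. Applied to an embedding of `M` into an injective
  module, this shows that `f` is injective; in general, that `Ext¹(coker f, -)` vanishes on such
  modules.
* For `E` injective, Ext against `E⋆ = Hom(E, ℚ/ℤ)` is dual to `Tor(-, E)`, and
  `N ⊗ E → Hom(N*, E)` is injective for `N` finitely presented. So `Extⁿ⁺¹(R/I, R) = 0` gives
  `Extⁿ⁺¹(R/I, E⋆) = 0`, i.e. the `n`-th syzygy of `E` is flat.
-/

open Abelian

section AbelianCategory

universe v w

variable {C : Type v} [Category.{w} C] [Abelian C] [HasExt.{u} C] {S : ShortComplex C}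

theorem exists_comp_g_eq_of_subsingleton_ext_one (hS : S.ShortExact) {X : C}
    [Subsingleton (Ext.{u} X S.X₁ 1)] (φ : X ⟶ S.X₃) : ∃ ψ : X ⟶ S.X₂, ψ ≫ S.g = φ := by
  obtain ⟨e, he⟩ := Ext.covariant_sequence_exact₃ X hS (Ext.mk₀ φ) rfl (Subsingleton.elim _ _)
  obtain ⟨ψ, rfl⟩ := Ext.addEquiv₀.symm.surjective e
  exact ⟨ψ, Ext.addEquiv₀.symm.injective (by simpa using he)⟩

theorem subsingleton_ext_one_X₃_iff (hS : S.ShortExact) [Projective S.X₂] (Y : C) :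
    Subsingleton (Ext.{u} S.X₃ Y 1) ↔ ∀ φ : S.X₁ ⟶ Y, ∃ ψ : S.X₂ ⟶ Y, S.f ≫ ψ = φ := by
  refine ⟨fun _ φ => ?_, fun h => subsingleton_of_forall_eq 0 fun e => ?_⟩
  · obtain ⟨e, he⟩ := Ext.contravariant_sequence_exact₁ hS Y (Ext.mk₀ φ) (add_comm 1 0)
      (Subsingleton.elim _ _)
    obtain ⟨ψ, rfl⟩ := Ext.addEquiv₀.symm.surjective e
    exact ⟨ψ, Ext.addEquiv₀.symm.injective (by simpa using he)⟩
  · obtain ⟨a, rfl⟩ := Ext.contravariant_sequence_exact₃ hS Y e (Ext.eq_zero_of_projective _)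
      (add_comm 1 0)
    obtain ⟨φ, rfl⟩ := Ext.addEquiv₀.symm.surjective a
    obtain ⟨ψ, rfl⟩ := h φ
    simp [← Ext.mk₀_comp_mk₀]

theorem subsingleton_ext_X₃_iff (hS : S.ShortExact) [Projective S.X₂] (Y : C) (i : ℕ) :
    Subsingleton (Ext.{u} S.X₃ Y (i + 2)) ↔ Subsingleton (Ext.{u} S.X₁ Y (i + 1)) := by
  refine ⟨fun _ => subsingleton_of_forall_eq 0 fun e => ?_,
    fun _ => subsingleton_of_forall_eq 0 fun e => ?_⟩
  · obtain ⟨a, rfl⟩ := Ext.contravariant_sequence_exact₁ hS Y e (add_comm 1 (i + 1))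
      (Subsingleton.elim _ _)
    rw [Ext.eq_zero_of_projective a, Ext.comp_zero]
  · obtain ⟨a, rfl⟩ := Ext.contravariant_sequence_exact₃ hS Y e (Ext.eq_zero_of_projective _)
      (add_comm 1 (i + 1))
    rw [Subsingleton.elim a 0, Ext.comp_zero]

theorem subsingleton_ext_X₁_iff (hS : S.ShortExact) [Injective S.X₂] (X : C) (i : ℕ) :
    Subsingleton (Ext.{u} X S.X₁ (i + 2)) ↔ Subsingleton (Ext.{u} X S.X₃ (i + 1)) := by
  refine ⟨fun _ => subsingleton_of_forall_eq 0 fun e => ?_,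
    fun _ => subsingleton_of_forall_eq 0 fun e => ?_⟩
  · obtain ⟨a, rfl⟩ := Ext.covariant_sequence_exact₃ X hS e rfl (Subsingleton.elim _ _)
    rw [Ext.eq_zero_of_injective a, Ext.zero_comp]
  · obtain ⟨a, rfl⟩ := Ext.covariant_sequence_exact₁ X hS e (Ext.eq_zero_of_injective _) rfl
    rw [Subsingleton.elim a 0, Ext.zero_comp]

end AbelianCategory

section ModuleExtension

variable {R : Type u} [Ring R]

theorem shortExact_moduleCatMk {A B C : Type u} [AddCommGroup A] [Module R A] [AddCommGroup B]
    [Module R B] [AddCommGroup C] [Module R C] {f : A →ₗ[R] B} {g : B →ₗ[R] C}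
    (hf : Function.Injective f) (hfg : Function.Exact f g) (hg : Function.Surjective g) :
    (ShortComplex.moduleCatMk f g hfg.linearMap_comp_eq_zero).ShortExact where
  exact := (ShortComplex.ShortExact.moduleCat_exact_iff_function_exact _).2 hfg
  mono_f := (ModuleCat.mono_iff_injective _).2 hf
  epi_g := (ModuleCat.epi_iff_surjective _).2 hg

theorem subsingleton_ext_one_iff_forall_exists_comp_eq {A B C : Type u} [AddCommGroup A]
    [Module R A] [AddCommGroup B] [Module R B] [Module.Projective R B] [AddCommGroup C]
    [Module R C] {f : A →ₗ[R] B} {g : B →ₗ[R] C} (hf : Function.Injective f)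
    (hfg : Function.Exact f g) (hg : Function.Surjective g) (Y : ModuleCat.{u} R) :
    Subsingleton (Ext.{u} (ModuleCat.of R C) Y 1) ↔
      ∀ φ : A →ₗ[R] Y, ∃ ψ : B →ₗ[R] Y, ψ ∘ₗ f = φ := by
  have : Projective (ShortComplex.moduleCatMk f g hfg.linearMap_comp_eq_zero).X₂ :=
    (IsProjective.iff_projective (R := R) B).1 inferInstance
  refine (subsingleton_ext_one_X₃_iff (shortExact_moduleCatMk hf hfg hg) Y).trans
    ⟨fun h φ => ?_, fun h φ => ?_⟩
  · obtain ⟨ψ, hψ⟩ := h (ModuleCat.ofHom φ)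
    exact ⟨ψ.hom, congrArg ModuleCat.Hom.hom hψ⟩
  · obtain ⟨ψ, hψ⟩ := h φ.hom
    exact ⟨ModuleCat.ofHom ψ, ModuleCat.hom_ext hψ⟩

theorem projective_projectiveShortComplex_X₂ (X : ModuleCat.{u} R) :
    Projective X.projectiveShortComplex.X₂ :=
  (IsProjective.iff_projective (R := R) X.projectiveShortComplex.X₂).1 inferInstance

end ModuleExtension

section TensorDuality

open TensorProduct Module

variable {R : Type u} [CommRing R] {E : Type u} {N N' N'' : Type*} [AddCommGroup E] [Module R E]
  [AddCommGroup N] [Module R N] [AddCommGroup N'] [Module R N'] [AddCommGroup N''] [Module R N'']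

theorem exact_lcomp_of_injective [Module.Injective R E] {f : N →ₗ[R] N'} {g : N' →ₗ[R] N''}
    (hfg : Function.Exact f g) :
    Function.Exact (LinearMap.lcomp R E g) (LinearMap.lcomp R E f) := by
  have hfg' : Function.Exact f g.rangeRestrict := by
    rwa [LinearMap.exact_iff, LinearMap.ker_rangeRestrict, ← LinearMap.exact_iff]
  intro φ
  refine (LinearMap.exact_lcomp_of_exact_of_surjective E hfg' g.surjective_rangeRestrict φ).trans
    ⟨?_, ?_⟩
  · rintro ⟨ψ, rfl⟩
    obtain ⟨χ, rfl⟩ := Module.Injective.extension_property R E _ _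
      (LinearMap.range g).subtype (LinearMap.range g).injective_subtype ψ
    exact ⟨χ, rfl⟩
  · rintro ⟨χ, rfl⟩
    exact ⟨χ ∘ₗ (LinearMap.range g).subtype, rfl⟩

variable (R E N) in
/-- The evaluation map `N ⊗ E → Hom(N*, E)`, `x ⊗ e ↦ (l ↦ l x • e)`. -/
def tensorToHomDual : N ⊗[R] E →ₗ[R] Dual R N →ₗ[R] E :=
  dualTensorHom R (Dual R N) E ∘ₗ (Dual.eval R N).rTensor E

theorem tensorToHomDual_comp_rTensor (i : N →ₗ[R] N') :
    tensorToHomDual R E N' ∘ₗ i.rTensor E =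
      LinearMap.lcomp R E i.dualMap ∘ₗ tensorToHomDual R E N := by
  refine TensorProduct.ext' fun x e => LinearMap.ext fun l => ?_
  simp [tensorToHomDual]

theorem bijective_tensorToHomDual [Module.Projective R N] [Module.Finite R N] :
    Function.Bijective (tensorToHomDual R E N) :=
  dualTensorHom_bijective.comp
    (LinearEquiv.rTensor E (evalEquiv R N)).bijective

theorem injective_tensorToHomDual [Module.Injective R E] [Module.FinitePresentation R N] :
    Function.Injective (tensorToHomDual R E N) := by
  obtain ⟨a, b, f, g, hf, hgf⟩ := Module.FinitePresentation.exists_fin' R N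
  have hdual : Function.Exact f.dualMap g.dualMap :=
    LinearMap.exact_lcomp_of_exact_of_surjective R hgf hf
  exact LinearMap.injective_of_surjective_of_injective_of_right_exact
    (g.rTensor E) (f.rTensor E) (LinearMap.lcomp R E g.dualMap) (LinearMap.lcomp R E f.dualMap)
    (tensorToHomDual R E (Fin b → R)) (tensorToHomDual R E (Fin a → R)) (tensorToHomDual R E N)
    (tensorToHomDual_comp_rTensor g).symm (tensorToHomDual_comp_rTensor f).symm
    (rTensor_exact E hgf hf) (exact_lcomp_of_injective hdual)
    bijective_tensorToHomDual.surjective bijective_tensorToHomDual.injective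
    (LinearMap.rTensor_surjective E hf)

theorem rTensor_injective_of_surjective_dualMap [Module.Injective R E]
    [Module.FinitePresentation R N] {i : N →ₗ[R] N'} (hi : Function.Surjective i.dualMap) :
    Function.Injective (i.rTensor E) := by
  have h : Function.Injective (LinearMap.lcomp R E i.dualMap ∘ₗ tensorToHomDual R E N) :=
    (LinearMap.lcomp_injective_of_surjective _ hi).comp injective_tensorToHomDual
  rw [← tensorToHomDual_comp_rTensor] at h
  exact .of_comp (f := tensorToHomDual R E N') h

end TensorDuality

section PseudoCoherent

variable {R : Type*} [Ring R] {M N : Type*} [AddCommGroup M] [Module R M] [AddCommGroup N]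
  [Module R N]

variable (R M) in
/-- Pseudo-coherent modules in the sense of Bourbaki: every finitely generated submodule is finitely
presented. A commutative ring is coherent iff it is pseudo-coherent as a module over itself. -/
def IsPseudoCoherent : Prop :=
  ∀ K : Submodule R M, K.FG → Module.FinitePresentation R K

namespace IsPseudoCoherent

theorem finitePresentation_of_injective (hN : IsPseudoCoherent R N) [Module.Finite R M]
    {f : M →ₗ[R] N} (hf : Function.Injective f) : Module.FinitePresentation R M :=
  have := hN f.range (Module.Finite.iff_fg.1 inferInstance)
  .of_equiv (LinearEquiv.ofInjective f hf).symm

theorem of_injective (hN : IsPseudoCoherent R N) {f : M →ₗ[R] N} (hf : Function.Injective f) :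
    IsPseudoCoherent R M := fun K hK =>
  have : Module.Finite R K := .of_fg hK
  hN.finitePresentation_of_injective (f := f ∘ₗ K.subtype) (hf.comp K.injective_subtype)

theorem of_ker {f : M →ₗ[R] N} (hker : IsPseudoCoherent R f.ker) (hN : IsPseudoCoherent R N) :
    IsPseudoCoherent R M := by
  intro K hK
  have : Module.Finite R K := .of_fg hK
  let g : K →ₗ[R] (f ∘ₗ K.subtype).range := (f ∘ₗ K.subtype).rangeRestrict
  have hg : Function.Surjective g := LinearMap.surjective_rangeRestrict _
  have : Module.FinitePresentation R (f ∘ₗ K.subtype).range :=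
    hN _ (Module.Finite.iff_fg.1 inferInstance)
  have : Module.Finite R g.ker := .of_fg (Module.FinitePresentation.fg_ker g hg)
  let i : g.ker →ₗ[R] f.ker := (K.subtype ∘ₗ g.ker.subtype).codRestrict f.ker fun x =>
    congrArg Subtype.val x.2
  have hi : Function.Injective i := fun _ _ hxy =>
    Subtype.ext (Subtype.ext (congrArg (fun z : f.ker => z.1) hxy))
  have : Module.FinitePresentation R g.ker := hker.finitePresentation_of_injective hi
  exact Module.finitePresentation_of_ker g hg

theorem finFun (hM : IsPseudoCoherent R M) (k : ℕ) : IsPseudoCoherent R (Fin k → M) := by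
  induction k with
  | zero => exact fun K _ => inferInstance
  | succ k ih =>
    let head : (Fin (k + 1) → M) →ₗ[R] M := LinearMap.proj 0
    let tail : head.ker →ₗ[R] (Fin k → M) := LinearMap.funLeft R M Fin.succ ∘ₗ head.ker.subtype
    have htail : Function.Injective tail := by
      rintro ⟨x, hx⟩ ⟨y, hy⟩ hxy
      exact Subtype.ext (funext (Fin.cases (hx.trans hy.symm) (congrFun hxy)))
    exact of_ker (ih.of_injective htail) hM

end IsPseudoCoherent

end PseudoCoherent

section Chase

open TensorProduct

theorem exact_piMap {R ι : Type*} [Ring R] {A B C : ι → Type*} [∀ i, AddCommGroup (A i)]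
    [∀ i, Module R (A i)] [∀ i, AddCommGroup (B i)] [∀ i, Module R (B i)]
    [∀ i, AddCommGroup (C i)] [∀ i, Module R (C i)]
    {f : ∀ i, A i →ₗ[R] B i} {g : ∀ i, B i →ₗ[R] C i} (h : ∀ i, Function.Exact (f i) (g i)) :
    Function.Exact (LinearMap.piMap f) (LinearMap.piMap g) := by
  intro x
  simp only [Set.mem_range, funext_iff, LinearMap.coe_piMap, Pi.map_apply, Pi.zero_apply,
    h _ _]
  exact Classical.skolem

variable {R : Type u} [CommRing R] {ι : Type*} (M : ι → Type*)
  [∀ i, AddCommGroup (M i)] [∀ i, Module R (M i)]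

theorem bijective_piRightHom_finFun (k : ℕ) :
    Function.Bijective (piRightHom R R (Fin k → R) M) := by
  let e := TensorProduct.comm R (Fin k → R) _ ≪≫ₗ piScalarRight R R (∀ i, M i) (Fin k)
  let e' (i : ι) := TensorProduct.comm R (Fin k → R) _ ≪≫ₗ piScalarRight R R (M i) (Fin k)
  have h (z) (i : ι) : e' i (piRightHom R R _ M z i) = fun j => e z j i := by
    induction z with
    | zero => simp only [map_zero, Pi.zero_apply]; rfl
    | tmul x y => funext j; simp [e, e']
    | add x y hx hy => simp only [map_add, Pi.add_apply, hx, hy]; rfl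
  have hfactor : ⇑(piRightHom R R (Fin k → R) M) =
      (Equiv.piCongrRight fun i => (e' i).symm.toEquiv) ∘ Equiv.piComm (fun _ i => M i) ∘ e :=
    funext fun z => funext fun i => (LinearEquiv.eq_symm_apply (e' i)).2 (h z i)
  rw [hfactor]
  exact (Equiv.bijective _).comp ((Equiv.bijective _).comp e.bijective)

theorem injective_piRightHom (N : Type*) [AddCommGroup N] [Module R N]
    [Module.FinitePresentation R N] :
    Function.Injective (piRightHom R R N M) := by
  obtain ⟨a, b, f, g, hf, hgf⟩ := Module.FinitePresentation.exists_fin' R N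
  have hpi := exact_piMap fun i => rTensor_exact (M i) hgf hf
  refine LinearMap.injective_of_surjective_of_injective_of_right_exact
    (g.rTensor _) (f.rTensor _) (LinearMap.piMap fun i => g.rTensor (M i))
    (LinearMap.piMap fun i => f.rTensor (M i))
    (piRightHom R R _ M) (piRightHom R R _ M) (piRightHom R R _ M) ?_ ?_
    (rTensor_exact _ hgf hf) hpi (bijective_piRightHom_finFun M b).surjective
    (bijective_piRightHom_finFun M a).injective (LinearMap.rTensor_surjective _ hf) <;>
  exact TensorProduct.ext' fun _ _ => rfl

theorem flat_pi_of_isCoherentRing (hR : IsCoherentRing R) [∀ i, Module.Flat R (M i)] :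
    Module.Flat R (∀ i, M i) := by
  rw [Module.Flat.iff_rTensor_injective]
  intro I hI
  have := hR I hI
  have hpi : Function.Injective (LinearMap.piMap fun i => I.subtype.rTensor (M i)) :=
    Function.Injective.piMap fun i => Module.Flat.rTensor_preserves_injective_linearMap _
      I.injective_subtype
  have h : LinearMap.piMap (fun i => I.subtype.rTensor (M i)) ∘ₗ
      piRightHom R R I M = piRightHom R R R M ∘ₗ I.subtype.rTensor _ :=
    TensorProduct.ext' fun _ _ => rfl
  refine .of_comp (f := piRightHom R R R M) ?_
  rw [← LinearMap.coe_comp, ← h]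
  exact hpi.comp (injective_piRightHom M I)

end Chase

section CharacterDuality

variable {R : Type u} [CommRing R]

theorem exists_finitePresentation_ker (hR : IsCoherentRing R) (P : Type*) [AddCommGroup P]
    [Module R P] [Module.FinitePresentation R P] :
    ∃ (a : ℕ) (p : (Fin a → R) →ₗ[R] P),
      Function.Surjective p ∧ Module.FinitePresentation R p.ker := by
  obtain ⟨a, p, hp⟩ := Module.Finite.exists_fin' R P
  exact ⟨a, p, hp, IsPseudoCoherent.finFun (M := R) hR a _ (Module.FinitePresentation.fg_ker p hp)⟩

theorem subsingleton_ext_characterModule_of_injective (hR : IsCoherentRing R) {E : Type u}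
    [AddCommGroup E] [Module R E] [Module.Injective R E] {k : ℕ} {P : Type u} [AddCommGroup P]
    [Module R P] [Module.FinitePresentation R P]
    (hP : Subsingleton (Ext.{u} (ModuleCat.of R P) (ModuleCat.of R R) (k + 1))) :
    Subsingleton
      (Ext.{u} (ModuleCat.of R P) (ModuleCat.of R (CharacterModule E)) (k + 1)) := by
  induction k generalizing P with
  | zero =>
    obtain ⟨a, p, hp, _⟩ := exists_finitePresentation_ker hR P
    have hker := p.ker.injective_subtype
    rw [subsingleton_ext_one_iff_forall_exists_comp_eq hker p.exact_subtype_ker_map hp] at hP ⊢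
    exact rTensor_injective_iff_lcomp_surjective.1 (rTensor_injective_of_surjective_dualMap hP)
  | succ k ih =>
    obtain ⟨a, p, hp, _⟩ := exists_finitePresentation_ker hR P
    have hS := LinearMap.shortExact_shortComplexKer hp
    have : Projective p.shortComplexKer.X₂ :=
      (IsProjective.iff_projective (R := R) (Fin a → R)).1 inferInstance
    exact (subsingleton_ext_X₃_iff hS _ k).2 (ih ((subsingleton_ext_X₃_iff hS _ k).1 hP))

theorem exact_characterModule_dual {A B C : Type*} [AddCommGroup A] [Module R A]
    [AddCommGroup B] [Module R B] [AddCommGroup C] [Module R C] {f : A →ₗ[R] B} {g : B →ₗ[R] C}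
    (hfg : Function.Exact f g) (hg : Function.Surjective g) :
    Function.Exact (CharacterModule.dual g) (CharacterModule.dual f) := by
  intro c
  refine ⟨fun hc => ?_, ?_⟩
  · have hker : g.toAddMonoidHom.ker ≤ AddMonoidHom.ker c := fun b hb => by
      obtain ⟨a, rfl⟩ := (hfg b).1 hb
      exact DFunLike.congr_fun hc a
    exact ⟨g.toAddMonoidHom.liftOfSurjective hg ⟨c, hker⟩, CharacterModule.ext (A := B) fun b =>
      g.toAddMonoidHom.liftOfRightInverse_comp_apply _
        (Function.rightInverse_surjInv hg) ⟨c, hker⟩ b⟩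
  · rintro ⟨c, rfl⟩
    rw [← LinearMap.comp_apply, ← CharacterModule.dual_comp, hfg.linearMap_comp_eq_zero,
      CharacterModule.dual_zero, LinearMap.zero_apply]

/-- The Pontryagin dual `S.X₃⋆ → S.X₂⋆ → S.X₁⋆` of a short complex of modules. -/
def characterShortComplex (S : ShortComplex (ModuleCat.{u} R)) :
    ShortComplex (ModuleCat.{u} R) :=
  ShortComplex.moduleCatMk (CharacterModule.dual S.g.hom) (CharacterModule.dual S.f.hom) <| by
    rw [← CharacterModule.dual_comp, ← ModuleCat.hom_comp, S.zero]
    exact CharacterModule.dual_zero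

theorem shortExact_characterShortComplex {S : ShortComplex (ModuleCat.{u} R)}
    (hS : S.ShortExact) : (characterShortComplex S).ShortExact :=
  shortExact_moduleCatMk (CharacterModule.dual_injective_of_surjective _ hS.moduleCat_surjective_g)
    (exact_characterModule_dual
      ((ShortComplex.ShortExact.moduleCat_exact_iff_function_exact S).1 hS.exact)
      hS.moduleCat_surjective_g)
    (CharacterModule.dual_surjective_of_injective _ hS.moduleCat_injective_f)

theorem flat_of_subsingleton_ext_one_characterModule {X : Type u} [AddCommGroup X] [Module R X]
    (hX : ∀ I : Ideal R, I.FG → Subsingleton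
      (Ext.{u} (ModuleCat.of R (R ⧸ I)) (ModuleCat.of R (CharacterModule X)) 1)) :
    Module.Flat R X := by
  rw [Module.Flat.iff_rTensor_injective]
  intro I hI
  rw [rTensor_injective_iff_lcomp_surjective]
  exact (subsingleton_ext_one_iff_forall_exists_comp_eq I.injective_subtype
    (LinearMap.exact_subtype_mkQ I) I.mkQ_surjective _).1 (hX I hI)

theorem hasProjectiveDimensionLT_of_subsingleton_ext_characterModule {d : ℕ}
    (hflat : ∀ F : ModuleCat.{u} R, Module.Flat R F → HasProjectiveDimensionLT F d) {k : ℕ}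
    {X : ModuleCat.{u} R} (hX : ∀ I : Ideal R, I.FG → Subsingleton
      (Ext.{u} (ModuleCat.of R (R ⧸ I)) (ModuleCat.of R (CharacterModule X)) (k + 1))) :
    HasProjectiveDimensionLT X (d + k) := by
  induction k generalizing X with
  | zero => exact hflat _ (flat_of_subsingleton_ext_one_characterModule hX)
  | succ k ih =>
    have hS := X.shortExact_projectiveShortComplex
    have : Module.Injective R (CharacterModule X.projectiveShortComplex.X₂) :=
      Module.Flat.iff_characterModule_injective.1 inferInstance
    have : Injective (characterShortComplex X.projectiveShortComplex).X₂ :=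
      Module.injective_object_of_injective_module R
        (CharacterModule X.projectiveShortComplex.X₂)
    have hker : HasProjectiveDimensionLT X.projectiveShortComplex.X₁ (d + k) :=
      ih fun I hI => (subsingleton_ext_X₁_iff (shortExact_characterShortComplex hS) _ k).1 (hX I hI)
    have := projective_projectiveShortComplex_X₂ X
    exact hS.hasProjectiveDimensionLT_X₃ _ hker (hasProjectiveDimensionLT_of_ge _ 1 _ (by omega))

theorem hasProjectiveDimensionLT_of_injective (hR : IsCoherentRing R) {n d : ℕ}
    (hFC : ∀ I : Ideal R, I.FG →
      Subsingleton (Ext.{u} (ModuleCat.of R (R ⧸ I)) (ModuleCat.of R R) (n + 1)))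
    (hflat : ∀ F : ModuleCat.{u} R, Module.Flat R F → HasProjectiveDimensionLT F d)
    (E : ModuleCat.{u} R) [Injective E] : HasProjectiveDimensionLT E (d + n) := by
  have : Module.Injective R E := (Module.injective_iff_injective_object R E).2 inferInstance
  refine hasProjectiveDimensionLT_of_subsingleton_ext_characterModule hflat fun I hI => ?_
  have : Module.FinitePresentation R (R ⧸ I) :=
    Module.finitePresentation_of_surjective I.mkQ I.mkQ_surjective (by rwa [I.ker_mkQ])
  exact subsingleton_ext_characterModule_of_injective hR (hFC I hI)

end CharacterDuality

section ProjectivePreenvelope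

theorem mapDomain_mapDomain_invFun {I J A : Type*} [Nonempty I] [AddCommMonoid A] {k : I → J}
    {v : J →₀ A} (hv : ↑v.support ⊆ Set.range k) :
    (v.mapDomain (Function.invFun k)).mapDomain k = v := by
  rw [← Finsupp.mapDomain_comp]
  exact (Finsupp.mapDomain_congr fun q hq => Function.invFun_eq (hv hq)).trans Finsupp.mapDomain_id

variable {R : Type u} [Ring R] {M : Type u} [AddCommGroup M] [Module R M]

/-- A projective preenvelope of `M`: a linear map from `M` to a projective module through which
every linear map from `M` to a projective module (in the universe of `M`) factors. -/
structure IsProjectivePreenvelope {P : Type u} [AddCommGroup P] [Module R P] (f : M →ₗ[R] P) :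
    Prop where
  projective : Module.Projective R P
  exists_comp_eq (Q : Type u) [AddCommGroup Q] [Module R Q] [Module.Projective R Q]
    (φ : M →ₗ[R] Q) : ∃ ψ : P →ₗ[R] Q, ψ ∘ₗ f = φ

theorem exists_comp_eq_of_projective {Q : Type*} [AddCommGroup Q] [Module R Q]
    [Module.Projective R Q] (φ : M →ₗ[R] Q) :
    ∃ (χ : M →ₗ[R] (M × ℕ →₀ R)) (ψ : (M × ℕ →₀ R) →ₗ[R] Q), ψ ∘ₗ χ = φ := by
  obtain ⟨s, hs⟩ := Module.projective_def.1 (inferInstance : Module.Projective R Q)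
  choose e he using fun x : M => Set.countable_iff_exists_subset_range.1
    (s (φ x)).support.finite_toSet.countable
  let k : M × ℕ → Q := fun p => e p.1 p.2
  have hk (x : M) : ↑(s (φ x)).support ⊆ Set.range k := (he x).trans <| by
    rintro _ ⟨i, rfl⟩
    exact ⟨(x, i), rfl⟩
  refine ⟨Finsupp.lmapDomain R R (Function.invFun k) ∘ₗ s ∘ₗ φ,
    Finsupp.linearCombination R id ∘ₗ Finsupp.lmapDomain R R k, LinearMap.ext fun x => ?_⟩
  simp only [LinearMap.comp_apply, Finsupp.lmapDomain_apply, mapDomain_mapDomain_invFun (hk x)]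
  exact hs (φ x)

end ProjectivePreenvelope

section FiniteProjectiveDimension

variable {R : Type u} [Ring R] {M : ModuleCat.{u} R}

/-- Left `Ext¹`-orthogonality to the modules of finite projective dimension. Vanishing of the higher
Ext groups is not part of the condition. -/
def FinProjDimOrthogonal (M : ModuleCat.{u} R) : Prop :=
  ∀ Q : ModuleCat.{u} R, (∃ k, HasProjectiveDimensionLT Q k) → Subsingleton (Ext.{u} M Q 1)

namespace FinProjDimOrthogonal

theorem exists_projective_lift (hM : FinProjDimOrthogonal M) {X : ModuleCat.{u} R}
    (hX : ∃ k, HasProjectiveDimensionLT X k) (φ : M →ₗ[R] X) :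
    ∃ χ : M →ₗ[R] X.projectiveShortComplex.X₂, X.projectiveShortComplex.g.hom ∘ₗ χ = φ := by
  obtain ⟨k, _⟩ := hX
  have hS := X.shortExact_projectiveShortComplex
  have := projective_projectiveShortComplex_X₂ X
  have : Subsingleton (Ext.{u} M X.projectiveShortComplex.X₁ 1) :=
    hM _ ⟨k + 1, hS.hasProjectiveDimensionLT_X₁ (k + 1)
      (hasProjectiveDimensionLT_of_ge _ 1 _ (by omega))
      (hasProjectiveDimensionLT_of_ge _ k _ (by omega))⟩
  obtain ⟨χ, hχ⟩ := exists_comp_g_eq_of_subsingleton_ext_one hS (ModuleCat.ofHom φ)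
  exact ⟨χ.hom, congrArg ModuleCat.Hom.hom hχ⟩

theorem exists_isProjectivePreenvelope (hM : FinProjDimOrthogonal M)
    (hpow : ∀ ι J : Type u, ∃ k, HasProjectiveDimensionLT (ModuleCat.of R (ι → J →₀ R)) k) :
    ∃ (P : ModuleCat.{u} R) (f : M →ₗ[R] P), IsProjectivePreenvelope f := by
  let F := ModuleCat.of R ((M →ₗ[R] (M × ℕ →₀ R)) → M × ℕ →₀ R)
  obtain ⟨f, hf⟩ := hM.exists_projective_lift (X := F) (hpow _ _) (LinearMap.pi fun χ => χ)
  refine ⟨F.projectiveShortComplex.X₂, f, inferInstance, fun Q _ _ _ φ => ?_⟩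
  obtain ⟨χ, ψ, rfl⟩ := exists_comp_eq_of_projective φ
  refine ⟨ψ ∘ₗ LinearMap.proj χ ∘ₗ F.projectiveShortComplex.g.hom, ?_⟩
  rw [LinearMap.comp_assoc, LinearMap.comp_assoc, hf, LinearMap.proj_pi]

variable {P : Type u} [AddCommGroup P] [Module R P] {f : M →ₗ[R] P}

theorem exists_comp_eq (hM : FinProjDimOrthogonal M) (hf : IsProjectivePreenvelope f)
    {X : ModuleCat.{u} R} (hX : ∃ k, HasProjectiveDimensionLT X k) (φ : M →ₗ[R] X) :
    ∃ ψ : P →ₗ[R] X, ψ ∘ₗ f = φ := by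
  obtain ⟨χ, rfl⟩ := hM.exists_projective_lift hX φ
  obtain ⟨ψ, rfl⟩ := hf.exists_comp_eq _ χ
  exact ⟨X.projectiveShortComplex.g.hom ∘ₗ ψ, LinearMap.comp_assoc ..⟩

theorem injective_of_isProjectivePreenvelope (hM : FinProjDimOrthogonal M)
    (hinj : ∀ E : ModuleCat.{u} R, Injective E → ∃ k, HasProjectiveDimensionLT E k)
    (hf : IsProjectivePreenvelope f) : Function.Injective f := by
  have hι : Function.Injective (Injective.ι M).hom :=
    (ModuleCat.mono_iff_injective _).1 inferInstance
  obtain ⟨ψ, hψ⟩ := hM.exists_comp_eq hf (hinj _ inferInstance) (Injective.ι M).hom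
  rw [← hψ] at hι
  exact .of_comp (f := ψ) hι

theorem quotient_range (hM : FinProjDimOrthogonal M) (hf : IsProjectivePreenvelope f)
    (hinj : Function.Injective f) : FinProjDimOrthogonal (ModuleCat.of R (P ⧸ f.range)) := by
  have := hf.projective
  exact fun Q hQ => (subsingleton_ext_one_iff_forall_exists_comp_eq hinj
    f.exact_map_mkQ_range f.range.mkQ_surjective Q).2 fun φ => hM.exists_comp_eq hf hQ φ

end FinProjDimOrthogonal

end FiniteProjectiveDimension

section ProperCoresolution

variable {R : Type u} [Ring R]

/-- `M` has a coresolution by projective modules that stays exact under `Hom(-, Q)` for every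
projective `Q` (in the universe of `M`). -/
def HasProperProjectiveCoresolution (M : ModuleCat.{u} R) : Prop :=
  ∃ (P : ℕ → ModuleCat.{u} R) (f : M →ₗ[R] P 0) (d : ∀ i : ℕ, P i →ₗ[R] P (i + 1)),
    (∀ i, Module.Projective R (P i)) ∧
    Function.Injective f ∧
    Function.Exact f (d 0) ∧
    (∀ i, Function.Exact (d i) (d (i + 1))) ∧
    (∀ (Q : ModuleCat.{u} R), Module.Projective R Q →
      Function.Surjective (fun φ : P 0 →ₗ[R] Q => φ ∘ₗ f) ∧
      Function.Exact (fun φ : P 1 →ₗ[R] Q => φ ∘ₗ d 0)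
        (fun φ : P 0 →ₗ[R] Q => φ ∘ₗ f) ∧
      (∀ i, Function.Exact (fun φ : P (i + 2) →ₗ[R] Q => φ ∘ₗ d (i + 1))
        (fun φ : P (i + 1) →ₗ[R] Q => φ ∘ₗ d i)))

theorem exact_comp_right_of_exact_of_surjective {A B C P Q : Type*} [AddCommGroup A] [Module R A]
    [AddCommGroup B] [Module R B] [AddCommGroup C] [Module R C] [AddCommGroup P] [Module R P]
    [AddCommGroup Q] [Module R Q] {f : A →ₗ[R] B} {q : B →ₗ[R] C} (hfq : Function.Exact f q)
    (hq : Function.Surjective q) {g : C →ₗ[R] P}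
    (hg : ∀ φ : C →ₗ[R] Q, ∃ ψ : P →ₗ[R] Q, ψ ∘ₗ g = φ) :
    Function.Exact (fun φ : P →ₗ[R] Q => φ ∘ₗ g ∘ₗ q) (fun φ : B →ₗ[R] Q => φ ∘ₗ f) := by
  intro φ
  constructor
  · intro hφ
    have hker : q.ker ≤ φ.ker := by
      rw [LinearMap.exact_iff.1 hfq]
      exact LinearMap.range_le_ker_iff.2 hφ
    obtain ⟨ψ, hψ⟩ := hg (q.ker.liftQ φ hker ∘ₗ (q.quotKerEquivOfSurjective hq).symm.toLinearMap)
    refine ⟨ψ, LinearMap.ext fun x => ?_⟩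
    have hx : (q.quotKerEquivOfSurjective hq).symm (q x) = q.ker.mkQ x :=
      (LinearEquiv.symm_apply_eq _).2 rfl
    simpa [hx] using LinearMap.congr_fun hψ (q x)
  · rintro ⟨ψ, rfl⟩
    simp only [LinearMap.comp_assoc, hfq.linearMap_comp_eq_zero, LinearMap.comp_zero]

theorem hasProperProjectiveCoresolution_of_exact {N P : ℕ → ModuleCat.{u} R}
    {f : ∀ i, N i →ₗ[R] P i} {q : ∀ i, P i →ₗ[R] N (i + 1)}
    (hpre : ∀ i, IsProjectivePreenvelope (f i)) (hf : ∀ i, Function.Injective (f i))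
    (hfq : ∀ i, Function.Exact (f i) (q i)) (hq : ∀ i, Function.Surjective (q i)) :
    HasProperProjectiveCoresolution (N 0) := by
  refine ⟨P, f 0, fun i => f (i + 1) ∘ₗ q i, fun i => (hpre i).projective, hf 0, ?_, fun i => ?_,
    fun Q _ => ⟨(hpre 0).exists_comp_eq Q, ?_, fun i => ?_⟩⟩
  · exact (hf 1).comp_exact_iff_exact.2 (hfq 0)
  · exact (hf (i + 2)).comp_exact_iff_exact.2 ((hq i).comp_exact_iff_exact.2 (hfq (i + 1)))
  · exact exact_comp_right_of_exact_of_surjective (hfq 0) (hq 0) ((hpre 1).exists_comp_eq Q)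
  · have h := exact_comp_right_of_exact_of_surjective (hfq (i + 1)) (hq (i + 1))
      ((hpre (i + 2)).exists_comp_eq Q)
    have hcancel : Function.Injective fun φ : N (i + 1) →ₗ[R] Q => φ ∘ₗ q i :=
      fun _ _ => (LinearMap.cancel_right (hq i)).1
    exact fun φ => (hcancel.eq_iff' (LinearMap.zero_comp _)).trans (h φ)

theorem hasProperProjectiveCoresolution_of_forall_exists {C : ModuleCat.{u} R → Prop}
    (hC : ∀ M, C M → ∃ (P : ModuleCat.{u} R) (f : M →ₗ[R] P), IsProjectivePreenvelope f ∧
      Function.Injective f ∧ C (ModuleCat.of R (P ⧸ f.range))) {M : ModuleCat.{u} R} (hM : C M) :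
    HasProperProjectiveCoresolution M := by
  choose P f hpre hf hquot using fun N : Subtype C => hC N.1 N.2
  let N : ℕ → Subtype C := Nat.rec ⟨M, hM⟩ fun _ X => ⟨_, hquot X⟩
  exact hasProperProjectiveCoresolution_of_exact (N := fun i => (N i).1)
    (q := fun i => (f (N i)).range.mkQ) (fun i => hpre (N i)) (fun i => hf (N i))
    (fun i => (f (N i)).exact_map_mkQ_range) fun i => (f (N i)).range.mkQ_surjective

end ProperCoresolution

section ExtVanish

variable {R : Type u} [CommRing R]

theorem extVanish_succ_iff (X Y : ModuleCat.{u} R) (i : ℕ) :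
    ExtVanish R X Y (i + 1) ↔ Subsingleton (Ext.{u} X Y (i + 1)) := by
  let P := ProjectiveResolution.of X
  have hcocycle : ExtVanish R X Y (i + 1) ↔ ∀ f : P.complex.X (i + 1) ⟶ Y,
      P.complex.d (i + 2) (i + 1) ≫ f = 0 →
        ∃ g : P.complex.X i ⟶ Y, P.complex.d (i + 1) i ≫ g = f := by
    rw [ExtVanish, extGroup, ← ModuleCat.isZero_iff_subsingleton,
      (P.isoExt (R := R) (i + 1) Y).isZero_iff, ← HomologicalComplex.exactAt_iff_isZero_homology,
      HomologicalComplex.exactAt_iff' _ i (i + 1) (i + 2) (by simp) (by simp),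
      ShortComplex.moduleCat_exact_iff]
    rfl
  rw [hcocycle]
  refine ⟨fun h => subsingleton_of_forall_eq 0 fun e => ?_, fun _ f hf => ?_⟩
  · obtain ⟨f, hf, rfl⟩ := P.extMk_surjective e (i + 2) rfl
    exact (P.extMk_eq_zero_iff f _ rfl hf i rfl).2 (h f hf)
  · exact (P.extMk_eq_zero_iff f _ rfl hf i rfl).1 (Subsingleton.elim _ _)

theorem projDimLE_iff (X : ModuleCat.{u} R) (n : ℕ) :
    ProjDimLE R X n ↔ HasProjectiveDimensionLT X (n + 1) := by
  rw [hasProjectiveDimensionLT_iff.{u}]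
  constructor
  · rintro h (_ | i) hi Y e
    · omega
    · have := (extVanish_succ_iff X Y i).1 (h Y _ hi)
      exact Subsingleton.elim _ _
  · rintro h Y (_ | i) hi
    · omega
    · exact (extVanish_succ_iff X Y i).2 (subsingleton_of_forall_eq 0 fun e => h _ hi e)

theorem projDimLE_of_injective (hR : IsCoherentRing R) {n m : ℕ}
    (hFC : ∀ P : ModuleCat.{u} R, Module.FinitePresentation R P →
      ExtVanish R P (ModuleCat.of R R) (n + 1))
    (hperf : ∀ F : ModuleCat.{u} R, Module.Flat R F → ProjDimLE R F m)
    (E : ModuleCat.{u} R) [Injective E] : ProjDimLE R E (m + n) := by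
  have hcyclic (I : Ideal R) (hI : I.FG) :
      Subsingleton (Ext.{u} (ModuleCat.of R (R ⧸ I)) (ModuleCat.of R R) (n + 1)) :=
    (extVanish_succ_iff _ _ n).1 <| hFC _ <|
      Module.finitePresentation_of_surjective I.mkQ I.mkQ_surjective (by rwa [I.ker_mkQ])
  have := hasProjectiveDimensionLT_of_injective hR hcyclic
    (fun F hF => (projDimLE_iff F m).1 (hperf F hF)) E
  exact (projDimLE_iff E _).2 (hasProjectiveDimensionLT_of_ge E (m + 1 + n) _ (by omega))

theorem finProjDimOrthogonal_of_extVanish_one {M : ModuleCat.{u} R}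
    (hM : ∀ Q : ModuleCat.{u} R, HasFinProjDim R Q → ExtVanish R M Q 1) :
    FinProjDimOrthogonal M := by
  rintro Q ⟨k, _⟩
  have hQ : ProjDimLE R Q k :=
    (projDimLE_iff Q k).2 (hasProjectiveDimensionLT_of_ge Q k _ (Nat.le_succ k))
  exact (extVanish_succ_iff M Q 0).1 (hM Q ⟨k, hQ⟩)

end ExtVanish

theorem stmt3_general (R : Type u) [Ring R]
    (hinj : ∀ E : ModuleCat.{u} R, Injective E → ∃ k, HasProjectiveDimensionLT E k)
    (hpow : ∀ ι J : Type u, ∃ k, HasProjectiveDimensionLT (ModuleCat.of R (ι → J →₀ R)) k)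
    (M : ModuleCat.{u} R) (hM : FinProjDimOrthogonal M) :
    HasProperProjectiveCoresolution M := by
  refine hasProperProjectiveCoresolution_of_forall_exists (fun N hN => ?_) hM
  obtain ⟨P, f, hf⟩ := hN.exists_isProjectivePreenvelope hpow
  have hf_inj := hN.injective_of_isProjectivePreenvelope hinj hf
  exact ⟨P, f, hf, hf_inj, hN.quotient_range hf hf_inj⟩

theorem stmt3 (R : Type u) [CommRing R] (n m : ℕ)
    (hcoh : IsCoherentRing R)
    (hFC : ∀ (P : ModuleCat.{u} R), Module.FinitePresentation R P →
      ExtVanish R P (ModuleCat.of R R) (n + 1))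
    (hperf : ∀ (F : ModuleCat.{u} R), Module.Flat R F → ProjDimLE R F m)
    (M : ModuleCat.{u} R)
    (hM : ∀ (Q : ModuleCat.{u} R), HasFinProjDim R Q →
      ∀ i : ℕ, 1 ≤ i → ExtVanish R M Q i) :
    ∃ (P : ℕ → ModuleCat.{u} R) (f : M →ₗ[R] P 0)
      (d : ∀ i : ℕ, P i →ₗ[R] P (i + 1)),
      (∀ i, Module.Projective R (P i)) ∧
      -- exactness of 0 → M → P⁰ → P¹ → ⋯
      Function.Injective f ∧
      Function.Exact f (d 0) ∧
      (∀ i, Function.Exact (d i) (d (i + 1))) ∧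
      -- the sequence stays exact after applying Hom_R(−, Q) for projective Q
      (∀ (Q : ModuleCat.{u} R), Module.Projective R Q →
        Function.Surjective (fun φ : P 0 →ₗ[R] Q => φ ∘ₗ f) ∧
        Function.Exact (fun φ : P 1 →ₗ[R] Q => φ ∘ₗ d 0)
          (fun φ : P 0 →ₗ[R] Q => φ ∘ₗ f) ∧
        (∀ i, Function.Exact (fun φ : P (i + 2) →ₗ[R] Q => φ ∘ₗ d (i + 1))
          (fun φ : P (i + 1) →ₗ[R] Q => φ ∘ₗ d i))) := by
  exact stmt3_general R
    (fun E _ => ⟨_, (projDimLE_iff E _).1 (projDimLE_of_injective hcoh hFC hperf E)⟩)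
    (fun ι J => ⟨_, (projDimLE_iff _ m).1
      (hperf _ (flat_pi_of_isCoherentRing (fun _ : ι => J →₀ R) hcoh))⟩)
    M (finProjDimOrthogonal_of_extVanish_one fun Q hQ => hM Q hQ 1 le_rfl)

end
end
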